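/- Let W, ΔW ∈ ℝ^{m×s}, let Y ∈ ℝ^{s×s} be nonsingular, and let ΔM ∈ ℝ^{s×s} satisfy YᵀY = WᵀW + ΔM. Define Q = (W + ΔW)·Y⁻¹. Then ‖I − QᵀQ‖ ≤ (‖ΔM‖ + 2‖W‖·‖ΔW‖ + ‖ΔW‖²)·‖Y⁻¹‖². -/

import Mathlib

open scoped Matrix

/-- The spectral norm (`ℓ²→ℓ²` operator norm) of a real matrix. -/
noncomputable def specNorm {m n : Type*} [Fintype m] [Fintype n] [DecidableEq n]
    (A : Matrix m n ℝ) : ℝ :=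
  ‖LinearMap.toContinuousLinearMap (Matrix.toEuclideanLin A)‖

/-- The smallest singular value of a real matrix: the infimum of `‖A x‖₂` over
unit vectors `x`. -/
noncomputable def sigmaMin {m n : Type*} [Fintype m] [Fintype n] [DecidableEq n]
    (A : Matrix m n ℝ) : ℝ :=
  sInf ((fun x : EuclideanSpace ℝ n => ‖Matrix.toEuclideanLin A x‖) ''
    {x : EuclideanSpace ℝ n | ‖x‖ = 1})

/-- The 2-norm condition number `κ(A) = ‖A‖ / σ_min(A)`. -/
noncomputable def condNum {m n : Type*} [Fintype m] [Fintype n] [DecidableEq n]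
    (A : Matrix m n ℝ) : ℝ :=
  specNorm A / sigmaMin A

/-!
Since `Y` has the right inverse `Z = Y⁻¹`, the identity is the congruence `Zᴴ (Yᴴ Y) Z`, so the loss
of orthogonality of `Q = V Z`, where `V = W + ΔW`, is `I - Qᴴ Q = Zᴴ (Yᴴ Y - Vᴴ V) Z`. The middle
factor is `ΔM` minus the change `Vᴴ V - Wᴴ W` of the Gram matrix, which has norm at most
`2 ‖W‖ ‖ΔW‖ + ‖ΔW‖²`; the congruence costs at most `‖Z‖²`.
-/

section Gram

open Matrix

variable {R m n p : Type*} [Fintype m]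

theorem one_sub_conjTranspose_mul_self_of_mul_eq_one [Ring R] [StarRing R] [Fintype n]
    [Fintype p] [DecidableEq p] {Y : Matrix p n R} {Z : Matrix n p R} (hYZ : Y * Z = 1)
    (V : Matrix m n R) :
    1 - (V * Z)ᴴ * (V * Z) = Zᴴ * (Yᴴ * Y - Vᴴ * V) * Z := by
  have one_eq : (1 : Matrix p p R) = (Y * Z)ᴴ * (Y * Z) := by
    rw [hYZ, conjTranspose_one, Matrix.one_mul]
  rw [one_eq]
  simp only [conjTranspose_mul, Matrix.mul_sub, Matrix.sub_mul, Matrix.mul_assoc]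

theorem conjTranspose_mul_self_add_sub [NonUnitalRing R] [StarRing R] (A E : Matrix m n R) :
    (A + E)ᴴ * (A + E) - Aᴴ * A = Aᴴ * E + Eᴴ * A + Eᴴ * E := by
  simp only [conjTranspose_add, Matrix.add_mul, Matrix.mul_add]
  abel

end Gram

section SpectralNorm

open Matrix

open scoped Matrix.Norms.L2Operator

variable {𝕜 m n p : Type*} [RCLike 𝕜] [Fintype m] [Fintype n] [Fintype p] [DecidableEq n]
  [DecidableEq p]

theorem specNorm_eq_l2_opNorm (A : Matrix m n ℝ) : specNorm A = ‖A‖ :=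
  rfl

theorem l2_opNorm_conjTranspose_mul_le (A : Matrix m n 𝕜) (B : Matrix m p 𝕜) :
    ‖Aᴴ * B‖ ≤ ‖A‖ * ‖B‖ := by
  classical
  simpa only [l2_opNorm_conjTranspose] using l2_opNorm_mul Aᴴ B

theorem l2_opNorm_conjTranspose_mul_mul_le (A : Matrix n n 𝕜) (Z : Matrix n p 𝕜) :
    ‖Zᴴ * A * Z‖ ≤ ‖A‖ * ‖Z‖ ^ 2 :=
  calc ‖Zᴴ * A * Z‖ ≤ ‖Zᴴ * A‖ * ‖Z‖ := l2_opNorm_mul _ _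
    _ ≤ ‖Z‖ * ‖A‖ * ‖Z‖ := by
      gcongr
      exact l2_opNorm_conjTranspose_mul_le Z A
    _ = ‖A‖ * ‖Z‖ ^ 2 := by ring

theorem l2_opNorm_conjTranspose_mul_self_add_sub_le (A E : Matrix m n 𝕜) :
    ‖(A + E)ᴴ * (A + E) - Aᴴ * A‖ ≤ 2 * ‖A‖ * ‖E‖ + ‖E‖ ^ 2 :=
  calc ‖(A + E)ᴴ * (A + E) - Aᴴ * A‖ = ‖Aᴴ * E + Eᴴ * A + Eᴴ * E‖ := by
        rw [conjTranspose_mul_self_add_sub]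
    _ ≤ ‖Aᴴ * E‖ + ‖Eᴴ * A‖ + ‖Eᴴ * E‖ := norm_add₃_le
    _ ≤ ‖A‖ * ‖E‖ + ‖E‖ * ‖A‖ + ‖E‖ * ‖E‖ := by
      gcongr <;> exact l2_opNorm_conjTranspose_mul_le _ _
    _ = 2 * ‖A‖ * ‖E‖ + ‖E‖ ^ 2 := by ring

theorem stmt_10_general (W ΔW : Matrix m n 𝕜) {Y : Matrix p n 𝕜} {Z : Matrix n p 𝕜}
    (hYZ : Y * Z = 1) {ΔM : Matrix n n 𝕜} (hYY : Yᴴ * Y = Wᴴ * W + ΔM) :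
    ‖1 - ((W + ΔW) * Z)ᴴ * ((W + ΔW) * Z)‖ ≤
      (‖ΔM‖ + 2 * ‖W‖ * ‖ΔW‖ + ‖ΔW‖ ^ 2) * ‖Z‖ ^ 2 := by
  have gram_diff : Yᴴ * Y - (W + ΔW)ᴴ * (W + ΔW) =
      ΔM - ((W + ΔW)ᴴ * (W + ΔW) - Wᴴ * W) := by
    rw [hYY]
    abel
  have gram_diff_le : ‖Yᴴ * Y - (W + ΔW)ᴴ * (W + ΔW)‖ ≤
      ‖ΔM‖ + 2 * ‖W‖ * ‖ΔW‖ + ‖ΔW‖ ^ 2 := by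
    rw [gram_diff, add_assoc]
    exact (norm_sub_le _ _).trans
      (add_le_add_right (l2_opNorm_conjTranspose_mul_self_add_sub_le W ΔW) _)
  calc ‖1 - ((W + ΔW) * Z)ᴴ * ((W + ΔW) * Z)‖
      = ‖Zᴴ * (Yᴴ * Y - (W + ΔW)ᴴ * (W + ΔW)) * Z‖ := by
        rw [one_sub_conjTranspose_mul_self_of_mul_eq_one hYZ]
    _ ≤ ‖Yᴴ * Y - (W + ΔW)ᴴ * (W + ΔW)‖ * ‖Z‖ ^ 2 := l2_opNorm_conjTranspose_mul_mul_le _ _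
    _ ≤ (‖ΔM‖ + 2 * ‖W‖ * ‖ΔW‖ + ‖ΔW‖ ^ 2) * ‖Z‖ ^ 2 := by gcongr

end SpectralNorm

theorem stmt_10 (m s : ℕ)
    (W ΔW : Matrix (Fin m) (Fin s) ℝ)
    (Y : Matrix (Fin s) (Fin s) ℝ) (hY : IsUnit Y.det)
    (ΔM : Matrix (Fin s) (Fin s) ℝ)
    (hYY : Yᵀ * Y = Wᵀ * W + ΔM) :
    specNorm (1 - ((W + ΔW) * Y⁻¹)ᵀ * ((W + ΔW) * Y⁻¹)) ≤
      (specNorm ΔM + 2 * specNorm W * specNorm ΔW + specNorm ΔW ^ 2) *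
        specNorm Y⁻¹ ^ 2 := by
  simpa only [specNorm_eq_l2_opNorm, Matrix.conjTranspose_eq_transpose_of_trivial] using
    stmt_10_general W ΔW (Y.mul_nonsing_inv hY) hYY
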